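/- Every locally discrete midpoint convex function f : ℤⁿ → ℝ ∪ {+∞} is integrally convex, i.e., its local convex envelope f̃ is a convex function on ℝⁿ. -/

import Mathlib

/-- The ℓ∞-norm of an integer vector, as a natural number. -/
def linf {n : ℕ} (z : Fin n → ℤ) : ℕ :=
  Finset.univ.sup fun i => (z i).natAbs

/-- Componentwise round-up of (x+y)/2. -/
def avgUp {n : ℕ} (x y : Fin n → ℤ) : Fin n → ℤ :=
  fun i => ⌈((x i + y i : ℚ)) / 2⌉

/-- Componentwise round-down of (x+y)/2. -/
def avgDown {n : ℕ} (x y : Fin n → ℤ) : Fin n → ℤ :=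
  fun i => ⌊((x i + y i : ℚ)) / 2⌋

/-- A set `S ⊆ ℤⁿ` is discrete midpoint convex. -/
def DMCSet {n : ℕ} (S : Set (Fin n → ℤ)) : Prop :=
  ∀ ⦃x⦄, x ∈ S → ∀ ⦃y⦄, y ∈ S → 2 ≤ linf (x - y) →
    avgUp x y ∈ S ∧ avgDown x y ∈ S

/-- `f` satisfies discrete midpoint convexity for the pair `(x, y)`.
Values are in `ℝ ∪ {+∞}`, modeled as `EReal` together with the hypothesis
that `f` never takes the value `⊥`. -/
def DMCPair {n : ℕ} (f : (Fin n → ℤ) → EReal) (x y : Fin n → ℤ) : Prop :=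
  f (avgUp x y) + f (avgDown x y) ≤ f x + f y

/-- `f` is globally discrete midpoint convex. -/
def GloballyDMC {n : ℕ} (f : (Fin n → ℤ) → EReal) : Prop :=
  ∀ x y : Fin n → ℤ, 2 ≤ linf (x - y) → DMCPair f x y

/-- The effective domain of `f`. -/
def effDom {n : ℕ} (f : (Fin n → ℤ) → EReal) : Set (Fin n → ℤ) :=
  {x | f x ≠ ⊤}

/-- `f` is locally discrete midpoint convex. -/
def LocallyDMC {n : ℕ} (f : (Fin n → ℤ) → EReal) : Prop :=
  DMCSet (effDom f) ∧ ∀ x y : Fin n → ℤ, linf (x - y) = 2 → DMCPair f x y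

/-- The integral neighborhood of a real point. -/
def intNbhd {n : ℕ} (x : Fin n → ℝ) : Set (Fin n → ℤ) :=
  {z | ∀ i, |x i - (z i : ℝ)| < 1}

/-- The local convex envelope `f̃` of `f`: at `x ∈ ℝⁿ`, the infimum of
`Σ_z λ_z f(z)` over convex combinations `x = Σ_z λ_z z` of points `z` of the
integral neighborhood `N(x)`. -/
noncomputable def envelope {n : ℕ} (f : (Fin n → ℤ) → EReal)
    (x : Fin n → ℝ) : EReal :=
  sInf { v : EReal | ∃ (t : Finset (Fin n → ℤ)) (lam : (Fin n → ℤ) → ℝ),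
    (∀ z ∈ t, z ∈ intNbhd x) ∧ (∀ z ∈ t, 0 ≤ lam z) ∧
    (∑ z ∈ t, lam z) = 1 ∧
    (∀ i, (∑ z ∈ t, lam z * (z i : ℝ)) = x i) ∧
    v = ∑ z ∈ t, ((lam z : EReal) * f z) }

/-- `f` is integrally convex: its local convex envelope is convex on `ℝⁿ`. -/
def IntegrallyConvexFn {n : ℕ} (f : (Fin n → ℤ) → EReal) : Prop :=
  ∀ (u v : Fin n → ℝ) (a b : ℝ), 0 ≤ a → 0 ≤ b → a + b = 1 →
    envelope f (a • u + b • v) ≤ (a : EReal) * envelope f u + (b : EReal) * envelope f v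

/-- A function on a convex set that is convex along all segments of length at most `δ` is
convex. -/
theorem convexOn_of_dist_le {E : Type*} [NormedAddCommGroup E] [NormedSpace ℝ E] {D : Set E}
    (hD : Convex ℝ D) {G : E → ℝ} {δ : ℝ} (hδ : 0 < δ)
    (h : ∀ p ∈ D, ∀ q ∈ D, dist p q ≤ δ → ∀ a b : ℝ, 0 ≤ a → 0 ≤ b → a + b = 1 →
      G (a • p + b • q) ≤ a * G p + b * G q) :
    ConvexOn ℝ D G := by
  have scale : ∀ k : ℕ, ∀ p ∈ D, ∀ q ∈ D, dist p q ≤ δ * (3 / 2) ^ k →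
      ∀ a b : ℝ, 0 ≤ a → 0 ≤ b → a + b = 1 → G (a • p + b • q) ≤ a * G p + b * G q := by
    intro k
    induction k with
    | zero => simpa using h
    | succ k ih =>
      intro p hp q hq hpq a b ha hb hab
      have hpq' : dist p q * (2 / 3) ≤ δ * (3 / 2) ^ k := by
        rw [pow_succ] at hpq; linarith
      have hpq'' : dist p q * (1 / 3) ≤ δ * (3 / 2) ^ k := by
        linarith [dist_nonneg (x := p) (y := q)]
      obtain ⟨m₁, hm₁⟩ : ∃ m, m = (2 / 3 : ℝ) • p + (1 / 3 : ℝ) • q := ⟨_, rfl⟩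
      obtain ⟨m₂, hm₂⟩ : ∃ m, m = (1 / 3 : ℝ) • p + (2 / 3 : ℝ) • q := ⟨_, rfl⟩
      have hm₁D : m₁ ∈ D := hm₁ ▸ hD hp hq (by norm_num) (by norm_num) (by norm_num)
      have hm₂D : m₂ ∈ D := hm₂ ▸ hD hp hq (by norm_num) (by norm_num) (by norm_num)
      have dist_of_sub : ∀ {x y : E} {c : ℝ}, 0 ≤ c → x - y = c • (p - q) →
          dist x y = dist p q * c := by
        intro x y c hc hxy
        rw [dist_eq_norm, hxy, norm_smul, Real.norm_of_nonneg hc, dist_eq_norm, mul_comm]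
      have d₁ : dist p m₁ ≤ δ * (3 / 2) ^ k := by
        rwa [dist_of_sub (c := 1 / 3) (by norm_num) (by rw [hm₁]; module)]
      have d₂ : dist m₁ m₂ ≤ δ * (3 / 2) ^ k := by
        rwa [dist_of_sub (c := 1 / 3) (by norm_num) (by rw [hm₁, hm₂]; module)]
      have d₃ : dist m₂ q ≤ δ * (3 / 2) ^ k := by
        rwa [dist_of_sub (c := 1 / 3) (by norm_num) (by rw [hm₂]; module)]
      have d₄ : dist p m₂ ≤ δ * (3 / 2) ^ k := by
        rwa [dist_of_sub (c := 2 / 3) (by norm_num) (by rw [hm₂]; module)]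
      have d₅ : dist m₁ q ≤ δ * (3 / 2) ^ k := by
        rwa [dist_of_sub (c := 2 / 3) (by norm_num) (by rw [hm₁]; module)]
      have g₁ := ih p hp m₂ hm₂D d₄ (1 / 2) (1 / 2) (by norm_num) (by norm_num) (by norm_num)
      have g₂ := ih m₁ hm₁D q hq d₅ (1 / 2) (1 / 2) (by norm_num) (by norm_num) (by norm_num)
      rw [show (1 / 2 : ℝ) • p + (1 / 2 : ℝ) • m₂ = m₁ by rw [hm₁, hm₂]; module] at g₁
      rw [show (1 / 2 : ℝ) • m₁ + (1 / 2 : ℝ) • q = m₂ by rw [hm₁, hm₂]; module] at g₂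
      have b₁ : G m₁ ≤ 2 / 3 * G p + 1 / 3 * G q := by linarith
      have b₂ : G m₂ ≤ 1 / 3 * G p + 2 / 3 * G q := by linarith
      obtain rfl : a = 1 - b := by linarith
      rcases le_total b (1 / 3) with hb₁ | hb₁
      · have := ih p hp m₁ hm₁D d₁ (1 - 3 * b) (3 * b) (by linarith) (by linarith) (by ring)
        rw [show (1 - 3 * b) • p + (3 * b) • m₁ = (1 - b) • p + b • q by
          rw [hm₁]; module] at this
        nlinarith
      rcases le_total b (2 / 3) with hb₂ | hb₂
      · have := ih m₁ hm₁D m₂ hm₂D d₂ (2 - 3 * b) (3 * b - 1) (by linarith) (by linarith)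
          (by ring)
        rw [show (2 - 3 * b) • m₁ + (3 * b - 1) • m₂ = (1 - b) • p + b • q by
          rw [hm₁, hm₂]; module] at this
        nlinarith
      · have := ih m₂ hm₂D q hq d₃ (3 - 3 * b) (3 * b - 2) (by linarith) (by linarith)
          (by ring)
        rw [show (3 - 3 * b) • m₂ + (3 * b - 2) • q = (1 - b) • p + b • q by
          rw [hm₂]; module] at this
        nlinarith
  refine ⟨hD, fun p hp q hq a b ha hb hab => ?_⟩
  obtain ⟨k, hk⟩ := pow_unbounded_of_one_lt (dist p q / δ) (show (1 : ℝ) < 3 / 2 by norm_num)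
  rw [div_lt_iff₀ hδ] at hk
  exact scale k p hp q hq (by linarith) a b ha hb hab

variable {n : ℕ}

theorem avgUp_apply (x y : Fin n → ℤ) (i : Fin n) : avgUp x y i = (x i + y i + 1) / 2 := by
  rw [avgUp, Int.ceil_eq_iff]
  have h₁ : x i + y i ≤ 2 * ((x i + y i + 1) / 2) := by omega
  have h₂ : 2 * ((x i + y i + 1) / 2) < x i + y i + 2 := by omega
  generalize (x i + y i + 1) / 2 = m at *
  qify at h₁ h₂
  constructor <;> linarith

theorem avgDown_apply (x y : Fin n → ℤ) (i : Fin n) : avgDown x y i = (x i + y i) / 2 := by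
  rw [avgDown, Int.floor_eq_iff]
  have h₁ : x i + y i < 2 * ((x i + y i) / 2) + 2 := by omega
  have h₂ : 2 * ((x i + y i) / 2) ≤ x i + y i := by omega
  generalize (x i + y i) / 2 = m at *
  qify at h₁ h₂
  constructor <;> linarith

theorem avgUp_add_avgDown (x y : Fin n → ℤ) (i : Fin n) :
    avgUp x y i + avgDown x y i = x i + y i := by
  rw [avgUp_apply, avgDown_apply]; omega

theorem avgUp_mem_Icc {x y a b : Fin n → ℤ} (hx : x ∈ Set.Icc a b) (hy : y ∈ Set.Icc a b) :
    avgUp x y ∈ Set.Icc a b := by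
  have h : ∀ i, a i ≤ avgUp x y i ∧ avgUp x y i ≤ b i := fun i => by
    have hax : a i ≤ x i := hx.1 i
    have hxb : x i ≤ b i := hx.2 i
    have hay : a i ≤ y i := hy.1 i
    have hyb : y i ≤ b i := hy.2 i
    rw [avgUp_apply]
    omega
  exact ⟨fun i => (h i).1, fun i => (h i).2⟩

theorem avgDown_mem_Icc {x y a b : Fin n → ℤ} (hx : x ∈ Set.Icc a b) (hy : y ∈ Set.Icc a b) :
    avgDown x y ∈ Set.Icc a b := by
  have h : ∀ i, a i ≤ avgDown x y i ∧ avgDown x y i ≤ b i := fun i => by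
    have hax : a i ≤ x i := hx.1 i
    have hxb : x i ≤ b i := hx.2 i
    have hay : a i ≤ y i := hy.1 i
    have hyb : y i ≤ b i := hy.2 i
    rw [avgDown_apply]
    omega
  exact ⟨fun i => (h i).1, fun i => (h i).2⟩

theorem natAbs_le_linf (z : Fin n → ℤ) (i : Fin n) : (z i).natAbs ≤ linf z :=
  Finset.le_sup (f := fun i => (z i).natAbs) (Finset.mem_univ i)

theorem exists_of_two_le_linf {z : Fin n → ℤ} (h : 2 ≤ linf z) : ∃ i, 2 ≤ (z i).natAbs := by
  by_contra! hlt
  have : linf z ≤ 1 := Finset.sup_le fun i _ => Nat.le_of_lt_succ (hlt i)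
  omega

/-- The squared Euclidean norm of an integer vector. -/
def sqNorm (z : Fin n → ℤ) : ℤ := ∑ i, z i ^ 2

theorem sqNorm_avg_lt {x y : Fin n → ℤ} (h : 2 ≤ linf (x - y)) :
    sqNorm (avgUp x y) + sqNorm (avgDown x y) < sqNorm x + sqNorm y := by
  simp only [sqNorm, ← Finset.sum_add_distrib]
  have key : ∀ i, ∃ d : ℤ, (d = 0 ∨ d = 1) ∧
      avgUp x y i = avgDown x y i + d ∧ x i + y i = 2 * avgDown x y i + d := by
    intro i
    rw [avgUp_apply, avgDown_apply]
    refine ⟨(x i + y i) % 2, ?_⟩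
    omega
  have expand : ∀ {p q m d : ℤ}, (d = 0 ∨ d = 1) → p + q = 2 * m + d →
      2 * ((m + d) ^ 2 + m ^ 2) + (p - q) ^ 2 = 2 * (p ^ 2 + q ^ 2) + d := by
    rintro p q m d hd hpq
    obtain rfl : p = 2 * m + d - q := by linarith
    rcases hd with rfl | rfl <;> ring
  obtain ⟨j, hj⟩ := exists_of_two_le_linf h
  refine Finset.sum_lt_sum (fun i _ => ?_) ⟨j, Finset.mem_univ j, ?_⟩
  · obtain ⟨d, hd, hup, hsum⟩ := key i
    rw [hup]
    have := expand hd hsum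
    rcases hd with rfl | rfl
    · nlinarith [sq_nonneg (x i - y i)]
    · have : x i - y i ≠ 0 := by omega
      have : 0 < (x i - y i) ^ 2 := by positivity
      linarith
  · obtain ⟨d, hd, hup, hsum⟩ := key j
    rw [hup]
    have := expand hd hsum
    have : 2 ^ 2 ≤ (x j - y j) ^ 2 := by
      rw [sq_le_sq]
      simp only [Pi.sub_apply] at hj
      rw [Int.abs_eq_natAbs (x j - y j)]
      exact_mod_cast hj
    omega

/-- The convex hull of the graph of `F` over a set of integer points. -/
def graphHull (F : (Fin n → ℤ) → ℝ) (T : Set (Fin n → ℤ)) : Set ((Fin n → ℝ) × ℝ) :=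
  convexHull ℝ ((fun z => ((fun i => (z i : ℝ)), F z)) '' T)

theorem graphHull_mono (F : (Fin n → ℤ) → ℝ) {T T' : Set (Fin n → ℤ)} (h : T ⊆ T') :
    graphHull F T ⊆ graphHull F T' :=
  convexHull_mono (Set.image_mono h)

theorem mem_graphHull_of_weights {F : (Fin n → ℤ) → ℝ} {T : Set (Fin n → ℤ)}
    {t : Finset (Fin n → ℤ)} {w : (Fin n → ℤ) → ℝ} {x : Fin n → ℝ} {c : ℝ}
    (hT : ∀ z ∈ t, w z ≠ 0 → z ∈ T) (hw : ∀ z ∈ t, 0 ≤ w z) (hsum : ∑ z ∈ t, w z = 1)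
    (hx : ∀ i, ∑ z ∈ t, w z * (z i : ℝ) = x i) (hc : ∑ z ∈ t, w z * F z = c) :
    (x, c) ∈ graphHull F T := by
  classical
  have hsum' : ∑ z ∈ t with w z ≠ 0, w z = 1 := by rw [Finset.sum_filter_ne_zero, hsum]
  have hmem := (convex_convexHull ℝ ((fun z => ((fun i => (z i : ℝ)), F z)) '' T)).sum_mem
    (t := t.filter fun z => w z ≠ 0) (w := w)
    (z := fun z => ((fun i => (z i : ℝ)), F z))
    (fun z hz => hw z (Finset.mem_filter.1 hz).1) hsum'
    (fun z hz => subset_convexHull ℝ _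
      ⟨z, hT z (Finset.mem_filter.1 hz).1 (Finset.mem_filter.1 hz).2, rfl⟩)
  rw [Finset.sum_filter_of_ne (p := fun z => w z ≠ 0)
    (fun z _ hz h0 => hz (by rw [h0, zero_smul]))] at hmem
  have heq : (x, c) = ∑ z ∈ t, w z • ((fun i => (z i : ℝ)), F z) := by
    refine Prod.ext ?_ ?_
    · ext i
      simp [Prod.fst_sum, Finset.sum_apply, hx]
    · simp [Prod.snd_sum, hc]
  rw [heq]
  exact hmem

theorem exists_weights_of_mem_graphHull {F : (Fin n → ℤ) → ℝ} {t : Finset (Fin n → ℤ)}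
    {x : Fin n → ℝ} {c : ℝ} (h : (x, c) ∈ graphHull F t) :
    ∃ w : (Fin n → ℤ) → ℝ, (∀ z ∈ t, 0 ≤ w z) ∧ ∑ z ∈ t, w z = 1 ∧
      (∀ i, ∑ z ∈ t, w z * (z i : ℝ) = x i) ∧ ∑ z ∈ t, w z * F z = c := by
  classical
  have hinj : Function.Injective
      (fun z : Fin n → ℤ => (((fun i => (z i : ℝ)), F z) : (Fin n → ℝ) × ℝ)) := by
    intro z z' hz
    ext i
    have : (z i : ℝ) = z' i := congrFun (congrArg Prod.fst hz) i
    exact_mod_cast this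
  rw [graphHull, ← Finset.coe_image, Finset.mem_convexHull'] at h
  obtain ⟨w, hw, hsum, hbar⟩ := h
  rw [Finset.sum_image hinj.injOn] at hsum hbar
  refine ⟨fun z => w ((fun i => (z i : ℝ)), F z),
    fun z hz => hw _ (Finset.mem_image_of_mem _ hz), hsum, fun i => ?_, ?_⟩
  · have := congrFun (congrArg Prod.fst hbar) i
    simpa [Prod.fst_sum, Finset.sum_apply] using this
  · have := congrArg Prod.snd hbar
    simpa [Prod.snd_sum] using this

theorem mem_intNbhd_of_linf_lt {t : Finset (Fin n → ℤ)} {w : (Fin n → ℤ) → ℝ} {x : Fin n → ℝ}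
    (hw : ∀ z ∈ t, 0 ≤ w z) (hsum : ∑ z ∈ t, w z = 1)
    (hx : ∀ i, ∑ z ∈ t, w z * (z i : ℝ) = x i)
    (hlt : ∀ y ∈ t, w y ≠ 0 → ∀ z ∈ t, w z ≠ 0 → linf (y - z) < 2)
    {z : Fin n → ℤ} (hz : z ∈ t) (hwz : w z ≠ 0) : z ∈ intNbhd x := by
  intro i
  have hpos : 0 < w z := lt_of_le_of_ne (hw z hz) hwz.symm
  have hdiff : ∀ y ∈ t, w y ≠ 0 → |(y i : ℝ) - z i| ≤ 1 := by
    intro y hy hwy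
    have h₁ := hlt y hy hwy z hz hwz
    have h₂ := natAbs_le_linf (y - z) i
    have h₃ : |y i - z i| ≤ 1 := by
      rw [Pi.sub_apply] at h₂
      rw [Int.abs_eq_natAbs]
      omega
    exact_mod_cast h₃
  have hsub : x i - z i = ∑ y ∈ t, w y * ((y i : ℝ) - z i) := by
    simp only [mul_sub, Finset.sum_sub_distrib, hx, ← Finset.sum_mul, hsum, one_mul]
  rw [abs_lt, hsub]
  constructor
  · rw [← hsum, ← Finset.sum_neg_distrib]
    refine Finset.sum_lt_sum (fun y hy => ?_) ⟨z, hz, by simpa using hpos⟩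
    by_cases hwy : w y = 0
    · simp [hwy]
    · nlinarith [hw y hy, (abs_le.1 (hdiff y hy hwy)).1]
  · refine lt_of_lt_of_eq ?_ hsum
    refine Finset.sum_lt_sum (fun y hy => ?_) ⟨z, hz, by simpa using hpos⟩
    by_cases hwy : w y = 0
    · simp [hwy]
    · nlinarith [hw y hy, (abs_le.1 (hdiff y hy hwy)).2]

theorem sum_transfer_mul {t : Finset (Fin n → ℤ)} (w g : (Fin n → ℤ) → ℝ) (m : ℝ)
    {y z u d : Fin n → ℤ} (hy : y ∈ t) (hz : z ∈ t) (hu : u ∈ t) (hd : d ∈ t) :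
    ∑ v ∈ t, (w v + m * ((Pi.single u 1 : (Fin n → ℤ) → ℝ) v + (Pi.single d 1 : (Fin n → ℤ) → ℝ) v
      - (Pi.single y 1 : (Fin n → ℤ) → ℝ) v - (Pi.single z 1 : (Fin n → ℤ) → ℝ) v)) * g v
      = ∑ v ∈ t, w v * g v + m * (g u + g d - g y - g z) := by
  have single : ∀ a ∈ t, ∑ v ∈ t, (Pi.single a 1 : (Fin n → ℤ) → ℝ) v * g v = g a := by
    intro a ha
    simp [Pi.single_apply, ha]
  simp only [add_mul, mul_assoc, sub_mul, Finset.sum_add_distrib, ← Finset.mul_sum,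
    Finset.sum_sub_distrib, single y hy, single z hz, single u hu, single d hd]

theorem exists_mem_graphHull_intNbhd_of_lt {F : (Fin n → ℤ) → ℝ} {t : Finset (Fin n → ℤ)}
    (ht : ∀ y ∈ t, ∀ z ∈ t, 2 ≤ linf (y - z) →
      avgUp y z ∈ t ∧ avgDown y z ∈ t ∧ F (avgUp y z) + F (avgDown y z) < F y + F z)
    {x : Fin n → ℝ} {c : ℝ} (h : (x, c) ∈ graphHull F t) :
    ∃ c' ≤ c, (x, c') ∈ graphHull F (t ∩ intNbhd x) := by
  have hK : IsCompact (graphHull F t ∩ {p | p.1 = x}) :=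
    ((t.finite_toSet.image _).isCompact_convexHull ℝ).inter_right
      (isClosed_eq continuous_fst continuous_const)
  obtain ⟨⟨x', c'⟩, ⟨hmem, rfl⟩, hmin⟩ :=
    hK.exists_isMinOn ⟨(x, c), h, rfl⟩ continuous_snd.continuousOn
  have hmin' : ∀ d, (x', d) ∈ graphHull F t → c' ≤ d := fun d hd => hmin (a := (x', d)) ⟨hd, rfl⟩
  obtain ⟨w, hw, hsum, hx, hc⟩ := exists_weights_of_mem_graphHull hmem
  have hlt : ∀ y ∈ t, w y ≠ 0 → ∀ z ∈ t, w z ≠ 0 → linf (y - z) < 2 := by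
    intro y hy hwy z hz hwz
    by_contra! hyz
    obtain ⟨hu, hd, hF⟩ := ht y hy z hz hyz
    have hne : y ≠ z := by
      rintro rfl
      simp [linf] at hyz
    set m := min (w y) (w z)
    have hm : 0 < m := lt_min (lt_of_le_of_ne (hw y hy) hwy.symm)
      (lt_of_le_of_ne (hw z hz) hwz.symm)
    have hmy : m ≤ w y := min_le_left _ _
    have hmz : m ≤ w z := min_le_right _ _
    have hnew := sum_transfer_mul w (m := m) (hy := hy) (hz := hz) (hu := hu) (hd := hd)
    have := hmin' _ (mem_graphHull_of_weights (T := t) (fun z hz _ => hz) (fun v hv => ?_) ?_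
      (fun i => ?_) (hnew F))
    · rw [hc] at this
      nlinarith
    · have hnonneg : ∀ a : Fin n → ℤ, 0 ≤ (Pi.single a 1 : (Fin n → ℤ) → ℝ) v := fun a => by
        rw [Pi.single_apply]; split_ifs <;> norm_num
      have hle : m * ((Pi.single y 1 : (Fin n → ℤ) → ℝ) v
          + (Pi.single z 1 : (Fin n → ℤ) → ℝ) v) ≤ w v := by
        rcases eq_or_ne v y with rfl | hvy
        · simpa [Pi.single_apply, hne] using hmy
        rcases eq_or_ne v z with rfl | hvz
        · simpa [Pi.single_apply, hvy] using hmz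
        · simpa [Pi.single_apply, hvy, hvz] using hw v hv
      nlinarith [mul_nonneg hm.le (hnonneg (avgUp y z)), mul_nonneg hm.le (hnonneg (avgDown y z))]
    · simpa [hsum] using hnew fun _ => 1
    · have hi : ((avgUp y z i : ℝ) + avgDown y z i) = y i + z i := by
        exact_mod_cast avgUp_add_avgDown y z i
      rw [hnew fun v => (v i : ℝ), hx i]
      linear_combination m * hi
  exact ⟨c', hmin' _ h, mem_graphHull_of_weights
    (fun z hz hwz => ⟨hz, mem_intNbhd_of_linf_lt hw hsum hx hlt hz hwz⟩) hw hsum hx hc⟩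

/-- On a finite set on which discrete midpoint convexity holds, any convex combination can be
replaced, at arbitrarily small extra cost, by one supported in the integral neighborhood. -/
theorem exists_mem_graphHull_intNbhd {F : (Fin n → ℤ) → ℝ} {t : Finset (Fin n → ℤ)}
    (ht : ∀ y ∈ t, ∀ z ∈ t, 2 ≤ linf (y - z) →
      avgUp y z ∈ t ∧ avgDown y z ∈ t ∧ F (avgUp y z) + F (avgDown y z) ≤ F y + F z)
    {x : Fin n → ℝ} {c ε : ℝ} (hε : 0 < ε) (h : (x, c) ∈ graphHull F t) :
    ∃ c' ≤ c + ε, (x, c') ∈ graphHull F (t ∩ intNbhd x) := by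
  classical
  obtain ⟨w, hw, hsum, hx, hc⟩ := exists_weights_of_mem_graphHull h
  have hsq : ∀ z : Fin n → ℤ, (0 : ℝ) ≤ sqNorm z := fun z => by
    exact_mod_cast Finset.sum_nonneg fun i _ => sq_nonneg (z i)
  obtain ⟨Q, hQ⟩ : ∃ Q, Q = ∑ z ∈ t, w z * (sqNorm z : ℝ) := ⟨_, rfl⟩
  have hQ0 : 0 ≤ Q := hQ ▸ Finset.sum_nonneg fun z hz => mul_nonneg (hw z hz) (hsq z)
  obtain ⟨η, hη⟩ : ∃ η, η = ε / (Q + 1) := ⟨_, rfl⟩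
  have hη0 : 0 < η := by rw [hη]; positivity
  have hηQ : η * Q ≤ ε := by
    rw [hη, div_mul_eq_mul_div, div_le_iff₀ (by positivity)]
    nlinarith
  have hpert : (x, c + η * Q) ∈ graphHull (fun z => F z + η * sqNorm z) t := by
    refine mem_graphHull_of_weights (fun z hz _ => hz) hw hsum hx ?_
    rw [← hc, hQ, Finset.mul_sum, ← Finset.sum_add_distrib]
    exact Finset.sum_congr rfl fun z _ => by ring
  obtain ⟨c', hc', hmem⟩ := exists_mem_graphHull_intNbhd_of_lt (fun y hy z hz hyz => by
    obtain ⟨hu, hd, hF⟩ := ht y hy z hz hyz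
    have hlt : (sqNorm (avgUp y z) + sqNorm (avgDown y z) : ℝ) < sqNorm y + sqNorm z := by
      exact_mod_cast sqNorm_avg_lt hyz
    exact ⟨hu, hd, by nlinarith⟩) hpert
  have hcoe : (t ∩ intNbhd x : Set (Fin n → ℤ)) = t.filter (· ∈ intNbhd x) := by
    ext z; simp
  rw [hcoe] at hmem ⊢
  obtain ⟨w', hw', hsum', hx', hcost⟩ := exists_weights_of_mem_graphHull hmem
  refine ⟨_, ?_, mem_graphHull_of_weights (fun z hz _ => hz) hw' hsum' hx' rfl⟩
  calc _ ≤ c' := by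
        rw [← hcost]
        exact Finset.sum_le_sum fun z hz => mul_le_mul_of_nonneg_left
          (by linarith [mul_nonneg hη0.le (hsq z)]) (hw' z hz)
    _ ≤ c + ε := by linarith

theorem exists_mem_graphHull_of_mem {F : (Fin n → ℤ) → ℝ} (F' : (Fin n → ℤ) → ℝ)
    {T : Set (Fin n → ℤ)} (hT : T.Finite) {x : Fin n → ℝ} {c : ℝ} (h : (x, c) ∈ graphHull F T) :
    ∃ c', (x, c') ∈ graphHull F' T := by
  lift T to Finset (Fin n → ℤ) using hT
  obtain ⟨w, hw, hsum, hx, -⟩ := exists_weights_of_mem_graphHull h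
  exact ⟨_, mem_graphHull_of_weights (fun z hz _ => hz) hw hsum hx rfl⟩

theorem intNbhd_subset_Icc {x : Fin n → ℝ} {α β : Fin n → ℤ} (hα : ∀ i, α i ≤ ⌊x i⌋)
    (hβ : ∀ i, ⌈x i⌉ ≤ β i) : intNbhd x ⊆ Set.Icc α β := by
  intro z hz
  refine ⟨fun i => (hα i).trans ?_, fun i => ?_⟩
  · have h := (abs_lt.1 (hz i)).2
    have : ⌊x i⌋ < z i + 1 := Int.floor_lt.2 (by push_cast; linarith)
    omega
  · have h := (abs_lt.1 (hz i)).1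
    have : z i - 1 < ⌈x i⌉ := Int.lt_ceil.2 (by push_cast; linarith)
    have hle : z i ≤ ⌈x i⌉ := by omega
    exact hle.trans (hβ i)

theorem finite_intNbhd (x : Fin n → ℝ) : (intNbhd x).Finite :=
  (Set.finite_Icc (fun i => ⌊x i⌋) (fun i => ⌈x i⌉)).subset
    (intNbhd_subset_Icc (fun _ => le_rfl) (fun _ => le_rfl))

theorem coe_mul_eq_coe_mul_toReal {f : EReal} (hf : f ≠ ⊥) {l : ℝ} (h : l ≠ 0 → f ≠ ⊤) :
    (l : EReal) * f = ((l * f.toReal : ℝ) : EReal) := by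
  by_cases hl : l = 0
  · simp [hl]
  · rw [EReal.coe_mul, EReal.coe_toReal (h hl) hf]

theorem sum_coe_mul_eq_coe {f : (Fin n → ℤ) → EReal} (hf : ∀ x, f x ≠ ⊥)
    {t : Finset (Fin n → ℤ)} {lam : (Fin n → ℤ) → ℝ} (h : ∀ z ∈ t, lam z ≠ 0 → f z ≠ ⊤) :
    ∑ z ∈ t, (lam z : EReal) * f z = ((∑ z ∈ t, lam z * (f z).toReal : ℝ) : EReal) := by
  classical
  induction t using Finset.induction_on with
  | empty => simp
  | insert a s ha ih =>
    rw [Finset.sum_insert ha, Finset.sum_insert ha, EReal.coe_add,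
      ih fun z hz => h z (Finset.mem_insert_of_mem hz),
      coe_mul_eq_coe_mul_toReal (hf a) (h a (Finset.mem_insert_self a s))]

theorem ne_top_of_sum_coe_mul_ne_top {f : (Fin n → ℤ) → EReal} (hf : ∀ x, f x ≠ ⊥)
    {t : Finset (Fin n → ℤ)} {lam : (Fin n → ℤ) → ℝ} (hlam : ∀ z ∈ t, 0 ≤ lam z)
    (h : ∑ z ∈ t, (lam z : EReal) * f z ≠ ⊤) {z : Fin n → ℤ} (hz : z ∈ t) (hlz : lam z ≠ 0) :
    f z ≠ ⊤ := by
  classical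
  intro htop
  apply h
  rw [← Finset.add_sum_erase t _ hz, htop,
    EReal.coe_mul_top_of_pos (lt_of_le_of_ne (hlam z hz) hlz.symm)]
  refine EReal.top_add_of_ne_bot (Finset.sum_induction _ (· ≠ ⊥) (fun a b ha hb => ?_) (by simp)
    fun y hy => ?_)
  · simp [EReal.add_eq_bot_iff, ha, hb]
  · rcases (hlam y (Finset.mem_of_mem_erase hy)).eq_or_lt with h0 | hpos
    · simp [← h0]
    · by_cases hy' : f y = ⊤
      · simp [hy', EReal.coe_mul_top_of_pos hpos]
      · rw [coe_mul_eq_coe_mul_toReal (hf y) fun _ => hy']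
        exact EReal.coe_ne_bot _

theorem envelope_le_of_mem_graphHull {f : (Fin n → ℤ) → EReal} (hf : ∀ x, f x ≠ ⊥)
    {x : Fin n → ℝ} {c : ℝ}
    (h : (x, c) ∈ graphHull (fun z => (f z).toReal) (effDom f ∩ intNbhd x)) :
    envelope f x ≤ c := by
  obtain ⟨t, ht⟩ := ((finite_intNbhd x).subset
    (Set.inter_subset_right (s := effDom f))).exists_finset_coe
  rw [← ht] at h
  have hmem : ∀ z ∈ t, z ∈ effDom f ∩ intNbhd x := fun z hz => ht ▸ Finset.mem_coe.2 hz
  obtain ⟨w, hw, hsum, hx, hc⟩ := exists_weights_of_mem_graphHull h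
  refine sInf_le ⟨t, w, fun z hz => (hmem z hz).2, hw, hsum, hx, ?_⟩
  rw [sum_coe_mul_eq_coe hf fun z hz _ => (hmem z hz).1, hc]

theorem exists_mem_graphHull_of_envelope_lt {f : (Fin n → ℤ) → EReal} (hf : ∀ x, f x ≠ ⊥)
    {x : Fin n → ℝ} {v : EReal} (h : envelope f x < v) :
    ∃ c : ℝ, (c : EReal) < v ∧
      (x, c) ∈ graphHull (fun z => (f z).toReal) (effDom f ∩ intNbhd x) := by
  obtain ⟨_, ⟨t, lam, hN, hlam, hsum, hx, rfl⟩, hv⟩ := sInf_lt_iff.1 h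
  have hdom : ∀ z ∈ t, lam z ≠ 0 → f z ≠ ⊤ := fun z hz =>
    ne_top_of_sum_coe_mul_ne_top hf hlam hv.ne_top hz
  rw [sum_coe_mul_eq_coe hf hdom] at hv
  exact ⟨_, hv, mem_graphHull_of_weights (fun z hz hlz => ⟨hdom z hz hlz, hN z hz⟩) hlam hsum hx
    rfl⟩

theorem envelope_ne_bot {f : (Fin n → ℤ) → EReal} (hf : ∀ x, f x ≠ ⊥) (x : Fin n → ℝ) :
    envelope f x ≠ ⊥ := by
  intro hbot
  have hK : IsCompact (graphHull (fun z => (f z).toReal) (effDom f ∩ intNbhd x)) :=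
    (((finite_intNbhd x).subset Set.inter_subset_right).image _).isCompact_convexHull ℝ
  obtain ⟨m, hm⟩ := hK.bddBelow_image continuous_snd.continuousOn
  obtain ⟨c, hc, hmem⟩ := exists_mem_graphHull_of_envelope_lt hf
    (hbot ▸ EReal.bot_lt_coe m : envelope f x < (m : EReal))
  exact absurd (hm ⟨_, hmem, rfl⟩) (not_le.2 (EReal.coe_lt_coe_iff.1 hc))

theorem convexOn_toReal_envelope {f : (Fin n → ℤ) → EReal} (hf : ∀ x, f x ≠ ⊥)
    (h : LocallyDMC f) :
    ConvexOn ℝ {x | envelope f x ≠ ⊤} fun x => (envelope f x).toReal := by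
  classical
  have mem_box : ∀ {α β : Fin n → ℤ} {z}, z ∈ (Finset.Icc α β).filter (· ∈ effDom f) ↔
      z ∈ Set.Icc α β ∧ z ∈ effDom f := by simp
  have box_avg : ∀ {α β : Fin n → ℤ}, ∀ y ∈ (Finset.Icc α β).filter (· ∈ effDom f),
      ∀ z ∈ (Finset.Icc α β).filter (· ∈ effDom f), 2 ≤ linf (y - z) →
      avgUp y z ∈ (Finset.Icc α β).filter (· ∈ effDom f) ∧
      avgDown y z ∈ (Finset.Icc α β).filter (· ∈ effDom f) := by
    intro α β y hy z hz hyz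
    rw [mem_box] at hy hz
    obtain ⟨hu, hd⟩ := h.1 hy.2 hz.2 hyz
    exact ⟨mem_box.2 ⟨avgUp_mem_Icc hy.1 hz.1, hu⟩, mem_box.2 ⟨avgDown_mem_Icc hy.1 hz.1, hd⟩⟩
  have to_box : ∀ {p : Fin n → ℝ} {α β : Fin n → ℤ} {c : ℝ}, (∀ i, α i ≤ ⌊p i⌋) →
      (∀ i, ⌈p i⌉ ≤ β i) →
      (p, c) ∈ graphHull (fun z => (f z).toReal) (effDom f ∩ intNbhd p) →
      (p, c) ∈ graphHull (fun z => (f z).toReal) ↑((Finset.Icc α β).filter (· ∈ effDom f)) :=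
    fun hα hβ hc => graphHull_mono _
      (fun z hz => mem_box.2 ⟨intNbhd_subset_Icc hα hβ hz.2, hz.1⟩) hc
  have from_box : ∀ {p : Fin n → ℝ} {α β : Fin n → ℤ} {c : ℝ} {F : (Fin n → ℤ) → ℝ},
      (p, c) ∈ graphHull F (↑((Finset.Icc α β).filter (· ∈ effDom f)) ∩ intNbhd p) →
      (p, c) ∈ graphHull F (effDom f ∩ intNbhd p) :=
    fun hc => graphHull_mono _
      (Set.inter_subset_inter_left _ fun z hz => (mem_box.1 (Finset.mem_coe.1 hz)).2) hc
  have combine : ∀ {p q : Fin n → ℝ} {c d a b : ℝ} {t : Set (Fin n → ℤ)},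
      (p, c) ∈ graphHull (fun z => (f z).toReal) t →
      (q, d) ∈ graphHull (fun z => (f z).toReal) t → 0 ≤ a → 0 ≤ b → a + b = 1 →
      (a • p + b • q, a * c + b * d) ∈ graphHull (fun z => (f z).toReal) t :=
    fun hc hd ha hb hab => convex_convexHull ℝ _ hc hd ha hb hab
  have convex_dom : Convex ℝ {x | envelope f x ≠ ⊤} := by
    intro p hp q hq a b ha hb hab
    obtain ⟨c, -, hc⟩ := exists_mem_graphHull_of_envelope_lt hf (lt_top_iff_ne_top.2 hp)
    obtain ⟨d, -, hd⟩ := exists_mem_graphHull_of_envelope_lt hf (lt_top_iff_ne_top.2 hq)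
    obtain ⟨e, he⟩ := exists_mem_graphHull_of_mem (fun _ => 0) (Finset.finite_toSet _) <| combine
      (to_box (α := fun i => min ⌊p i⌋ ⌊q i⌋) (β := fun i => max ⌈p i⌉ ⌈q i⌉)
        (fun i => min_le_left _ _) (fun i => le_max_left _ _) hc)
      (to_box (fun i => min_le_right _ _) (fun i => le_max_right _ _) hd) ha hb hab
    obtain ⟨e', -, he'⟩ := exists_mem_graphHull_intNbhd (fun y hy z hz hyz =>
      ⟨(box_avg y hy z hz hyz).1, (box_avg y hy z hz hyz).2, le_rfl⟩) one_pos he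
    obtain ⟨r, hr⟩ := exists_mem_graphHull_of_mem (fun z => (f z).toReal)
      ((finite_intNbhd _).subset Set.inter_subset_right) (from_box he')
    exact ((envelope_le_of_mem_graphHull hf hr).trans_lt (EReal.coe_lt_top r)).ne
  refine convexOn_of_dist_le convex_dom one_pos fun p hp q hq hpq a b ha hb hab => ?_
  have hcomb : envelope f (a • p + b • q) ≠ ⊤ := convex_dom hp hq ha hb hab
  refine le_of_forall_pos_le_add fun ε hε => ?_
  have near : ∀ x, envelope f x ≠ ⊤ → ∃ c < (envelope f x).toReal + ε / 2,
      (x, c) ∈ graphHull (fun z => (f z).toReal) (effDom f ∩ intNbhd x) := by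
    intro x hx
    obtain ⟨c, hc, hmem⟩ := exists_mem_graphHull_of_envelope_lt hf
      (v := (((envelope f x).toReal + ε / 2 : ℝ) : EReal)) (by
        nth_rewrite 1 [← EReal.coe_toReal hx (envelope_ne_bot hf x)]
        exact EReal.coe_lt_coe_iff.2 (by linarith))
    exact ⟨c, EReal.coe_lt_coe_iff.1 hc, hmem⟩
  obtain ⟨c, hc, hcp⟩ := near p hp
  obtain ⟨d, hd, hdq⟩ := near q hq
  have close : ∀ i, |p i - q i| ≤ 1 := fun i =>
    (Real.dist_eq (p i) (q i)).symm.trans_le ((dist_le_pi_dist p q i).trans hpq)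
  have ceil_le : ∀ i, ⌈p i⌉ ≤ min ⌊p i⌋ ⌊q i⌋ + 2 ∧ ⌈q i⌉ ≤ min ⌊p i⌋ ⌊q i⌋ + 2 := by
    intro i
    have h₁ := abs_le.1 (close i)
    have hp' := Int.lt_floor_add_one (p i)
    have hq' := Int.lt_floor_add_one (q i)
    rcases min_choice ⌊p i⌋ ⌊q i⌋ with hm | hm <;> rw [hm] <;>
      constructor <;> refine Int.ceil_le.2 ?_ <;> push_cast <;> linarith
  have hmem := combine
    (to_box (α := fun i => min ⌊p i⌋ ⌊q i⌋) (β := fun i => min ⌊p i⌋ ⌊q i⌋ + 2)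
      (fun i => min_le_left _ _) (fun i => (ceil_le i).1) hcp)
    (to_box (fun i => min_le_right _ _) (fun i => (ceil_le i).2) hdq) ha hb hab
  obtain ⟨e, hle, he⟩ := exists_mem_graphHull_intNbhd (ε := ε / 2) (fun y hy z hz hyz => by
    obtain ⟨hu, hd⟩ := box_avg y hy z hz hyz
    refine ⟨hu, hd, ?_⟩
    have hlinf : linf (y - z) = 2 := by
      refine le_antisymm (Finset.sup_le fun i _ => ?_) hyz
      have hy₁ := (mem_box.1 hy).1.1 i
      have hy₂ := (mem_box.1 hy).1.2 i
      have hz₁ := (mem_box.1 hz).1.1 i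
      have hz₂ := (mem_box.1 hz).1.2 i
      simp only [Pi.sub_apply] at *
      omega
    have hpair : f (avgUp y z) + f (avgDown y z) ≤ f y + f z := h.2 y z hlinf
    rw [← EReal.coe_toReal (mem_box.1 hy).2 (hf y), ← EReal.coe_toReal (mem_box.1 hz).2 (hf z),
      ← EReal.coe_toReal (mem_box.1 hu).2 (hf _), ← EReal.coe_toReal (mem_box.1 hd).2 (hf _)]
      at hpair
    exact_mod_cast hpair) (by positivity) hmem
  have hfin := envelope_le_of_mem_graphHull hf (from_box he)
  rw [← EReal.coe_toReal hcomb (envelope_ne_bot hf _), EReal.coe_le_coe_iff] at hfin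
  nlinarith

/-- Every locally discrete midpoint convex function is integrally convex. -/
theorem locallyDMC_integrallyConvex {n : ℕ} (f : (Fin n → ℤ) → EReal)
    (hf : ∀ x, f x ≠ ⊥) (h : LocallyDMC f) :
    IntegrallyConvexFn f := by
  intro u v a b ha hb hab
  have hconv := convexOn_toReal_envelope hf h
  have scale_ne_bot : ∀ {c : ℝ} (x : Fin n → ℝ), 0 < c → (c : EReal) * envelope f x ≠ ⊥ := by
    intro c x hc
    by_cases hx : envelope f x = ⊤
    · simp [hx, EReal.coe_mul_top_of_pos hc]
    · rw [← EReal.coe_toReal hx (envelope_ne_bot hf x), ← EReal.coe_mul]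
      exact EReal.coe_ne_bot _
  rcases ha.eq_or_lt with rfl | ha'
  · obtain rfl : b = 1 := by linarith
    simp
  rcases hb.eq_or_lt with rfl | hb'
  · obtain rfl : a = 1 := by linarith
    simp
  by_cases hu : envelope f u = ⊤
  · rw [hu, EReal.coe_mul_top_of_pos ha', EReal.top_add_of_ne_bot (scale_ne_bot v hb')]
    exact le_top
  by_cases hv : envelope f v = ⊤
  · rw [hv, EReal.coe_mul_top_of_pos hb', EReal.add_top_of_ne_bot (scale_ne_bot u ha')]
    exact le_top
  have hcomb : envelope f (a • u + b • v) ≠ ⊤ := hconv.1 hu hv ha hb hab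
  have hle := hconv.2 hu hv ha hb hab
  rw [← EReal.coe_toReal hu (envelope_ne_bot hf u), ← EReal.coe_toReal hv (envelope_ne_bot hf v),
    ← EReal.coe_toReal hcomb (envelope_ne_bot hf _)]
  exact_mod_cast hle
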